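/- arXiv:2105.14119 — 3 statements merged into one kernel-verified Lean document; each statement's English description precedes it below -/
import Mathlib

section
/- Let P and Q be probability distributions on the countable set X, let V be a nonempty class of functions X → Y with f ∈ V, and let h : X → Y. Then E_{x ~ Q^n}[ min_{A ⊆ {1,…,n}} L_x(V, h, A) ] ≤ c·|P − Q|_TV + E_{z ~ P^n}[ L_z(V, h) ]. Consequently, E_{x ~ Q^n}[ ℓ_x(f, h, A*) ] ≤ c·|P − Q|_TV + E_{z ~ P^n}[ L_z(V, h) ], where for each x, A* denotes any minimizer of A ↦ L_x(V, h, A) over subsets of {1,…,n} (the bound holds simultaneously for all such minimizers, i.e., for the worst one). -/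
open Finset MeasureTheory

/-- Selective test loss with abstention set `A`. -/
noncomputable def selLoss {X Y : Type*} (ℓ : Y → Y → ℝ) (c : ℝ) {n : ℕ}
    (x : Fin n → X) (f h : X → Y) (A : Finset (Fin n)) : ℝ :=
  c / (n : ℝ) * (A.card : ℝ) + (1 / (n : ℝ)) * ∑ i ∈ Aᶜ, ℓ (f (x i)) (h (x i))

/-- `L_x(V,h,A) = sup_{g ∈ V} ℓ_x(g,h,A)`. -/
noncomputable def worstSelLoss {X Y : Type*} (ℓ : Y → Y → ℝ) (c : ℝ) {n : ℕ}
    (x : Fin n → X) (V : Set (X → Y)) (h : X → Y) (A : Finset (Fin n)) : ℝ :=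
  ⨆ g ∈ V, selLoss ℓ c x g h A

/-- `L_z(V,h) = sup_{g ∈ V} (1/n)·Σ_i ℓ(g(z_i), h(z_i))`. -/
noncomputable def worstLoss {X Y : Type*} (ℓ : Y → Y → ℝ) {n : ℕ}
    (z : Fin n → X) (V : Set (X → Y)) (h : X → Y) : ℝ :=
  ⨆ g ∈ V, (1 / (n : ℝ)) * ∑ i, ℓ (g (z i)) (h (z i))

/-- Total variation distance between two distributions on a countable space. -/
noncomputable def tvDist {X : Type*} (P Q : PMF X) : ℝ :=
  (1 / 2) * ∑' a : X, |(P a).toReal - (Q a).toReal|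

/-!
Couple `P` and `Q` maximally, so that a pair `(z, x)` drawn from the coupling has `z ≠ x` with
probability exactly `tvDist P Q`, and couple the two samples by `n` independent such pairs.
Abstaining on the indices where `x i ≠ z i` costs `c / n` per index, and every other index also
contributes to the loss on `z`. Hence the optimal worst-case selective loss on `x` is at most
`c / n` times the Hamming distance of the samples plus the worst-case loss on `z`; in expectation
the Hamming distance is `n * tvDist P Q`. For a minimizer `A*`, the selective loss of `f ∈ V` is at
most the minimum of the worst-case one.
-/

section MaximalCoupling

open scoped ENNReal

variable {X : Type*} (P Q : PMF X)

theorem pmf_tsum_min_add_tsum_tsub : ∑' a, min (P a) (Q a) + ∑' a, (P a - Q a) = 1 := by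
  rw [← ENNReal.tsum_add, ← P.tsum_coe]
  simp only [add_comm (min _ _), tsub_add_min]

theorem pmf_tsum_tsub_ne_top : ∑' a, (P a - Q a) ≠ ∞ := by
  intro htop
  simpa [htop] using pmf_tsum_min_add_tsum_tsub P Q

theorem pmf_tsum_tsub_comm : ∑' a, (P a - Q a) = ∑' a, (Q a - P a) := by
  have hmin : ∑' a, min (P a) (Q a) ≠ ∞ := by
    intro htop
    simpa [htop] using pmf_tsum_min_add_tsum_tsub P Q
  refine (ENNReal.add_right_inj hmin).1 ((pmf_tsum_min_add_tsum_tsub P Q).trans ?_)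
  simpa only [min_comm] using (pmf_tsum_min_add_tsum_tsub Q P).symm

theorem abs_toReal_sub_toReal_eq_toReal_tsub_add_tsub {a b : ℝ≥0∞} (ha : a ≠ ∞) (hb : b ≠ ∞) :
    |a.toReal - b.toReal| = ((a - b) + (b - a)).toReal := by
  wlog hab : a ≤ b generalizing a b
  · rw [abs_sub_comm, add_comm, this hb ha (le_of_not_ge hab)]
  rw [tsub_eq_zero_of_le hab, zero_add, ENNReal.toReal_sub_of_le hab hb,
    abs_of_nonpos (sub_nonpos.2 (ENNReal.toReal_mono hb hab)), neg_sub]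

theorem tvDist_eq_toReal_tsum_tsub : tvDist P Q = (∑' a, (P a - Q a)).toReal := by
  have hne (a : X) : P a - Q a + (Q a - P a) ≠ ∞ := by simp [P.apply_ne_top, Q.apply_ne_top]
  simp only [tvDist, abs_toReal_sub_toReal_eq_toReal_tsub_add_tsub (P.apply_ne_top _)
    (Q.apply_ne_top _)]
  rw [← ENNReal.tsum_toReal_eq hne, ENNReal.tsum_add, ← pmf_tsum_tsub_comm P Q,
    ENNReal.toReal_add (pmf_tsum_tsub_ne_top P Q) (pmf_tsum_tsub_ne_top P Q)]
  ring

open scoped Classical in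
/-- The mass function of the maximal coupling of `P` and `Q`: the common part `min P Q` is put on
the diagonal, and the excesses `P - Q` and `Q - P` (truncated subtraction), which have equal total
mass, are coupled independently. When `P = Q` the inverse is `∞`, but it is multiplied by `0`. -/
noncomputable def maximalCouplingMass (w : X × X) : ℝ≥0∞ :=
  (if w.1 = w.2 then min (P w.1) (Q w.1) else 0) +
    (∑' a, (P a - Q a))⁻¹ * ((P w.1 - Q w.1) * (Q w.2 - P w.2))

theorem maximalCouplingMass_swap (w : X × X) :
    maximalCouplingMass P Q w.swap = maximalCouplingMass Q P w := by
  obtain ⟨a, b⟩ := w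
  by_cases hab : a = b
  · simp [maximalCouplingMass, hab, min_comm, pmf_tsum_tsub_comm P Q, mul_comm]
  · simp [maximalCouplingMass, hab, Ne.symm hab, pmf_tsum_tsub_comm P Q, mul_comm]

theorem tsum_maximalCouplingMass_fst (a : X) : ∑' b, maximalCouplingMass P Q (a, b) = P a := by
  have hexcess : (∑' x, (P x - Q x))⁻¹ * ((P a - Q a) * ∑' b, (Q b - P b)) = P a - Q a := by
    rw [← pmf_tsum_tsub_comm P Q]
    rcases eq_or_ne (∑' x, (P x - Q x)) 0 with hzero | hzero
    · simp [ENNReal.tsum_eq_zero.1 hzero a]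
    · rw [mul_comm, mul_assoc, ENNReal.mul_inv_cancel hzero (pmf_tsum_tsub_ne_top P Q), mul_one]
  simp only [maximalCouplingMass]
  rw [ENNReal.tsum_add, ENNReal.tsum_mul_left, ENNReal.tsum_mul_left, hexcess,
    tsum_eq_single a fun b hb ↦ if_neg hb.symm, if_pos rfl, add_comm, tsub_add_min]

theorem tsum_maximalCouplingMass_snd (b : X) : ∑' a, maximalCouplingMass P Q (a, b) = Q b := by
  simpa only [← maximalCouplingMass_swap P Q, Prod.swap_prod_mk] using
    tsum_maximalCouplingMass_fst Q P b

/-- The maximal coupling of `P` and `Q`: a joint distribution with marginals `P` and `Q` whose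
coordinates differ with probability `tvDist P Q`. -/
noncomputable def maximalCoupling : PMF (X × X) :=
  ⟨maximalCouplingMass P Q, by
    rw [← P.tsum_coe]
    simpa only [ENNReal.tsum_prod', tsum_maximalCouplingMass_fst] using
      ENNReal.summable.hasSum (f := maximalCouplingMass P Q)⟩

theorem maximalCoupling_apply (w : X × X) : maximalCoupling P Q w = maximalCouplingMass P Q w :=
  rfl

theorem map_fst_maximalCoupling : (maximalCoupling P Q).map Prod.fst = P := by
  ext a
  rw [PMF.map_apply, ENNReal.tsum_prod', tsum_eq_single a fun x hx ↦ by simp [hx.symm]]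
  simp [maximalCoupling_apply, tsum_maximalCouplingMass_fst]

theorem map_snd_maximalCoupling : (maximalCoupling P Q).map Prod.snd = Q := by
  ext b
  rw [PMF.map_apply, ENNReal.tsum_prod', ENNReal.tsum_comm,
    tsum_eq_single b fun y hy ↦ by simp [hy.symm]]
  simp [maximalCoupling_apply, tsum_maximalCouplingMass_snd]

theorem indicator_offDiag_maximalCoupling (w : X × X) :
    {w : X × X | w.1 ≠ w.2}.indicator (maximalCoupling P Q) w =
      (∑' a, (P a - Q a))⁻¹ * ((P w.1 - Q w.1) * (Q w.2 - P w.2)) := by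
  obtain ⟨a, b⟩ := w
  by_cases hab : a = b
  · subst hab
    rcases le_total (P a) (Q a) with hle | hle <;> simp [tsub_eq_zero_of_le hle]
  · simp [maximalCoupling_apply, maximalCouplingMass, hab]

theorem toReal_toOuterMeasure_maximalCoupling_ne :
    ((maximalCoupling P Q).toOuterMeasure {w | w.1 ≠ w.2}).toReal = tvDist P Q := by
  rw [PMF.toOuterMeasure_apply, tvDist_eq_toReal_tsum_tsub]
  congr 1
  simp only [indicator_offDiag_maximalCoupling]
  rw [ENNReal.tsum_mul_left, ENNReal.tsum_prod']
  simp only [ENNReal.tsum_mul_left, ENNReal.tsum_mul_right]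
  rw [← pmf_tsum_tsub_comm P Q]
  rcases eq_or_ne (∑' a, (P a - Q a)) 0 with hzero | hzero
  · simp [hzero]
  · rw [← mul_assoc, ENNReal.inv_mul_cancel hzero (pmf_tsum_tsub_ne_top P Q), one_mul]

end MaximalCoupling

section Measurability

theorem aemeasurable_of_ae_mem_countable {α β : Type*} [MeasurableSpace α]
    [MeasurableSingletonClass α] [MeasurableSpace β] {μ : Measure α} {s : Set α}
    (hs : s.Countable) (hμ : ∀ᵐ x ∂μ, x ∈ s) (f : α → β) : AEMeasurable f μ := by
  have := hs.to_subtype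
  rw [← Measure.restrict_eq_self_of_ae_mem hμ]
  exact aemeasurable_restrict_of_measurable_subtype hs.measurableSet .of_discrete

theorem ae_mem_support_toMeasure {α : Type*} [MeasurableSpace α] [MeasurableSingletonClass α]
    (p : PMF α) : ∀ᵐ x ∂p.toMeasure, x ∈ p.support := by
  rw [← p.restrict_toMeasure_support]
  exact ae_restrict_mem p.support_countable.measurableSet

theorem aemeasurable_toMeasure {α β : Type*} [MeasurableSpace α] [MeasurableSingletonClass α]
    [MeasurableSpace β] (p : PMF α) (f : α → β) : AEMeasurable f p.toMeasure :=
  aemeasurable_of_ae_mem_countable p.support_countable (ae_mem_support_toMeasure p) f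

theorem nullMeasurableSet_toMeasure {α : Type*} [MeasurableSpace α] [MeasurableSingletonClass α]
    (p : PMF α) (s : Set α) : NullMeasurableSet s p.toMeasure :=
  (aemeasurable_indicator_const_iff (1 : ℝ)).1 (aemeasurable_toMeasure p _)

theorem aemeasurable_pi_toMeasure {ι β : Type*} [Fintype ι] {α : ι → Type*}
    [∀ i, MeasurableSpace (α i)] [∀ i, MeasurableSingletonClass (α i)] [MeasurableSpace β]
    (p : ∀ i, PMF (α i)) (f : (∀ i, α i) → β) :
    AEMeasurable f (Measure.pi fun i ↦ (p i).toMeasure) :=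
  aemeasurable_of_ae_mem_countable (Set.countable_pi fun i ↦ (p i).support_countable)
    (ae_all_iff.2 fun i ↦
      (measurePreserving_eval _ i).quasiMeasurePreserving.ae (ae_mem_support_toMeasure (p i))) f

end Measurability

section Transport

variable {ι : Type*} [Fintype ι]

theorem integral_pi_map_snd_le_sum_add_integral_pi_map_fst {α β : ι → Type*}
    [∀ i, MeasurableSpace (α i)] [∀ i, MeasurableSpace (β i)]
    {κ : ∀ i, Measure (α i × β i)} [∀ i, IsProbabilityMeasure (κ i)]
    {F : (∀ i, β i) → ℝ} {G : (∀ i, α i) → ℝ} {D : ∀ i, α i × β i → ℝ}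
    (hF : Integrable F (Measure.pi fun i ↦ (κ i).map Prod.snd))
    (hG : Integrable G (Measure.pi fun i ↦ (κ i).map Prod.fst))
    (hD : ∀ i, Integrable (D i) (κ i))
    (hFG : ∀ z x, F x ≤ ∑ i, D i (z i, x i) + G z) :
    ∫ x, F x ∂(Measure.pi fun i ↦ (κ i).map Prod.snd) ≤
      ∑ i, ∫ w, D i w ∂(κ i) + ∫ z, G z ∂(Measure.pi fun i ↦ (κ i).map Prod.fst) := by
  have (i : ι) : IsProbabilityMeasure ((κ i).map Prod.fst) :=
    Measure.isProbabilityMeasure_map measurable_fst.aemeasurable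
  have (i : ι) : IsProbabilityMeasure ((κ i).map Prod.snd) :=
    Measure.isProbabilityMeasure_map measurable_snd.aemeasurable
  have hfst : MeasurePreserving (fun (w : ∀ i, α i × β i) i ↦ (w i).1) (Measure.pi κ)
      (Measure.pi fun i ↦ (κ i).map Prod.fst) :=
    measurePreserving_pi _ _ fun i ↦ ⟨measurable_fst, rfl⟩
  have hsnd : MeasurePreserving (fun (w : ∀ i, α i × β i) i ↦ (w i).2) (Measure.pi κ)
      (Measure.pi fun i ↦ (κ i).map Prod.snd) :=
    measurePreserving_pi _ _ fun i ↦ ⟨measurable_snd, rfl⟩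
  have hDi (i : ι) : Integrable (fun w : ∀ i, α i × β i ↦ D i (w i)) (Measure.pi κ) :=
    integrable_comp_eval (hD i)
  have hsum : Integrable (fun w : ∀ i, α i × β i ↦ ∑ i, D i (w i)) (Measure.pi κ) :=
    integrable_finsetSum _ fun i _ ↦ hDi i
  have hGfst : Integrable (fun w : ∀ i, α i × β i ↦ G fun i ↦ (w i).1) (Measure.pi κ) :=
    hfst.integrable_comp_of_integrable hG
  calc
    ∫ x, F x ∂(Measure.pi fun i ↦ (κ i).map Prod.snd)
        = ∫ w, F (fun i ↦ (w i).2) ∂(Measure.pi κ) := by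
      rw [← hsnd.map_eq, integral_map hsnd.aemeasurable (hsnd.map_eq ▸ hF.aestronglyMeasurable)]
    _ ≤ ∫ w, (∑ i, D i (w i) + G fun i ↦ (w i).1) ∂(Measure.pi κ) :=
      integral_mono (hsnd.integrable_comp_of_integrable hF) (hsum.add hGfst) fun w ↦ hFG _ _
    _ = ∑ i, ∫ w, D i (w i) ∂(Measure.pi κ) + ∫ w, G (fun i ↦ (w i).1) ∂(Measure.pi κ) := by
      rw [integral_add hsum hGfst, integral_finsetSum _ fun i _ ↦ hDi i]
    _ = ∑ i, ∫ w, D i w ∂(κ i) + ∫ z, G z ∂(Measure.pi fun i ↦ (κ i).map Prod.fst) := by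
      congr 1
      · exact sum_congr rfl fun i _ ↦ integral_comp_eval (hD i).aestronglyMeasurable
      · rw [← hfst.map_eq,
          integral_map hfst.aemeasurable (hfst.map_eq ▸ hG.aestronglyMeasurable)]

theorem integral_pi_toMeasure_le_mul_tvDist_add {X : Type*} [MeasurableSpace X]
    [MeasurableSingletonClass X] [DecidableEq X] (P Q : PMF X) {F G : (ι → X) → ℝ}
    (hF : Integrable F (Measure.pi fun _ ↦ Q.toMeasure))
    (hG : Integrable G (Measure.pi fun _ ↦ P.toMeasure)) (K : ℝ)
    (hFG : ∀ z x, F x ≤ K * hammingDist z x + G z) :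
    ∫ x, F x ∂(Measure.pi fun _ ↦ Q.toMeasure) ≤
      Fintype.card ι * (K * tvDist P Q) + ∫ z, G z ∂(Measure.pi fun _ ↦ P.toMeasure) := by
  set κ := (maximalCoupling P Q).toMeasure
  have hfst : κ.map Prod.fst = P.toMeasure := by
    rw [PMF.toMeasure_map _ _ measurable_fst, map_fst_maximalCoupling]
  have hsnd : κ.map Prod.snd = Q.toMeasure := by
    rw [PMF.toMeasure_map _ _ measurable_snd, map_snd_maximalCoupling]
  have hne : κ.real {w | w.1 ≠ w.2} = tvDist P Q := by
    rw [Measure.real, PMF.toMeasure_apply_eq_toOuterMeasure,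
      toReal_toOuterMeasure_maximalCoupling_ne]
  have hmeas : NullMeasurableSet {w : X × X | w.1 ≠ w.2} κ := nullMeasurableSet_toMeasure _ _
  have hmismatch : Integrable ({w : X × X | w.1 ≠ w.2}.indicator fun _ ↦ K) κ :=
    (integrable_const K).indicator₀ hmeas
  rw [← hfst] at hG ⊢
  rw [← hsnd] at hF ⊢
  refine (integral_pi_map_snd_le_sum_add_integral_pi_map_fst hF hG (fun _ ↦ hmismatch)
    fun z x ↦ (hFG z x).trans_eq ?_).trans_eq ?_
  · simp [hammingDist, Set.indicator_apply, sum_ite, mul_comm]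
  · rw [integral_indicator₀ hmeas, setIntegral_const, hne]
    simp [mul_comm]

end Transport

section SelectiveLoss

variable {X Y : Type*} {ℓ : Y → Y → ℝ} {B c : ℝ} {n : ℕ}

theorem selLoss_nonneg (hℓ : ∀ y y', 0 ≤ ℓ y y') (hc : 0 ≤ c) (x : Fin n → X) (f h : X → Y)
    (A : Finset (Fin n)) : 0 ≤ selLoss ℓ c x f h A := by
  have hsum : 0 ≤ ∑ i ∈ Aᶜ, ℓ (f (x i)) (h (x i)) := sum_nonneg fun i _ ↦ hℓ _ _
  unfold selLoss
  positivity

theorem selLoss_le_add_selLoss_empty (hℓ : ∀ y y', 0 ≤ ℓ y y') {x z : Fin n → X}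
    {A : Finset (Fin n)} (hxz : ∀ i ∉ A, x i = z i) (f h : X → Y) :
    selLoss ℓ c x f h A ≤ c / n * #A + selLoss ℓ c z f h ∅ := by
  have hsum : ∑ i ∈ Aᶜ, ℓ (f (x i)) (h (x i)) ≤ ∑ i, ℓ (f (z i)) (h (z i)) :=
    calc
      ∑ i ∈ Aᶜ, ℓ (f (x i)) (h (x i)) = ∑ i ∈ Aᶜ, ℓ (f (z i)) (h (z i)) :=
        sum_congr rfl fun i hi ↦ by rw [hxz i (mem_compl.1 hi)]
      _ ≤ ∑ i, ℓ (f (z i)) (h (z i)) :=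
        sum_le_sum_of_subset_of_nonneg (subset_univ _) fun i _ _ ↦ hℓ _ _
  simp only [selLoss, card_empty, Nat.cast_zero, mul_zero, zero_add, compl_empty]
  gcongr

theorem selLoss_empty_le (hℓ : ∀ y y', ℓ y y' ≤ B) (hn : 0 < n) (x : Fin n → X) (f h : X → Y) :
    selLoss ℓ c x f h ∅ ≤ B := by
  have hsum : ∑ i, ℓ (f (x i)) (h (x i)) ≤ n * B := by
    simpa using sum_le_card_nsmul univ (fun i ↦ ℓ (f (x i)) (h (x i))) B fun i _ ↦ hℓ _ _
  simpa [selLoss, inv_mul_le_iff₀ (Nat.cast_pos.2 hn : (0 : ℝ) < n)] using hsum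

theorem worstSelLoss_empty (x : Fin n → X) (V : Set (X → Y)) (h : X → Y) :
    worstSelLoss ℓ c x V h ∅ = worstLoss ℓ x V h := by
  simp [worstSelLoss, worstLoss, selLoss]

theorem worstSelLoss_nonneg (hℓ : ∀ y y', 0 ≤ ℓ y y') (hc : 0 ≤ c) (x : Fin n → X)
    (V : Set (X → Y)) (h : X → Y) (A : Finset (Fin n)) : 0 ≤ worstSelLoss ℓ c x V h A :=
  Real.iSup_nonneg fun _ ↦ Real.iSup_nonneg fun _ ↦ selLoss_nonneg hℓ hc _ _ _ _

theorem worstLoss_mem_Icc (hℓ : ∀ y y', ℓ y y' ∈ Set.Icc 0 B) (hn : 0 < n) (x : Fin n → X)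
    (V : Set (X → Y)) (h : X → Y) : worstLoss ℓ x V h ∈ Set.Icc 0 B := by
  let y := h (x ⟨0, hn⟩)
  have hB : 0 ≤ B := (hℓ y y).1.trans (hℓ y y).2
  rw [← worstSelLoss_empty (c := 0)]
  exact ⟨worstSelLoss_nonneg (fun _ _ ↦ (hℓ _ _).1) le_rfl _ _ _ _,
    Real.iSup_le (fun f ↦ Real.iSup_le
      (fun _ ↦ selLoss_empty_le (fun _ _ ↦ (hℓ _ _).2) hn x f h) hB) hB⟩

theorem selLoss_le_worstSelLoss (hℓ : ∀ y y', ℓ y y' ∈ Set.Icc 0 B) (hn : 0 < n) (x : Fin n → X)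
    {V : Set (X → Y)} {f : X → Y} (hf : f ∈ V) (h : X → Y) (A : Finset (Fin n)) :
    selLoss ℓ c x f h A ≤ worstSelLoss ℓ c x V h A := by
  refine le_ciSup₂ (f := fun g (_ : g ∈ V) ↦ selLoss ℓ c x g h A) ⟨c / n * #A + B, ?_⟩ f hf
  rintro _ ⟨_, ⟨g, rfl⟩, ⟨-, rfl⟩⟩
  exact (selLoss_le_add_selLoss_empty (fun _ _ ↦ (hℓ _ _).1) (fun _ _ ↦ rfl) g h).trans
    (add_le_add_right (selLoss_empty_le (fun _ _ ↦ (hℓ _ _).2) hn x g h) _)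

theorem worstSelLoss_le_add_worstLoss (hℓ : ∀ y y', ℓ y y' ∈ Set.Icc 0 B) (hc : 0 ≤ c)
    (hn : 0 < n) {x z : Fin n → X} {A : Finset (Fin n)} (hxz : ∀ i ∉ A, x i = z i)
    (V : Set (X → Y)) (h : X → Y) :
    worstSelLoss ℓ c x V h A ≤ c / n * #A + worstLoss ℓ z V h := by
  have hrhs : 0 ≤ c / n * #A + worstLoss ℓ z V h :=
    add_nonneg (by positivity) (worstLoss_mem_Icc hℓ hn z V h).1
  refine Real.iSup_le (fun f ↦ Real.iSup_le (fun hf ↦ ?_) hrhs) hrhs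
  calc
    selLoss ℓ c x f h A ≤ c / n * #A + selLoss ℓ c z f h ∅ :=
      selLoss_le_add_selLoss_empty (fun _ _ ↦ (hℓ _ _).1) hxz f h
    _ ≤ c / n * #A + worstLoss ℓ z V h := by
      rw [← worstSelLoss_empty (c := c)]
      gcongr
      exact selLoss_le_worstSelLoss hℓ hn z hf h ∅

theorem iInf_worstSelLoss_le (x : Fin n → X) (V : Set (X → Y)) (h : X → Y)
    (A : Finset (Fin n)) : ⨅ A, worstSelLoss ℓ c x V h A ≤ worstSelLoss ℓ c x V h A :=
  ciInf_le (Set.finite_range _).bddBelow A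

theorem iInf_worstSelLoss_mem_Icc (hℓ : ∀ y y', ℓ y y' ∈ Set.Icc 0 B) (hc : 0 ≤ c) (hn : 0 < n)
    (x : Fin n → X) (V : Set (X → Y)) (h : X → Y) :
    ⨅ A, worstSelLoss ℓ c x V h A ∈ Set.Icc 0 B := by
  refine ⟨Real.iInf_nonneg fun A ↦ worstSelLoss_nonneg (fun _ _ ↦ (hℓ _ _).1) hc x V h A,
    (iInf_worstSelLoss_le x V h ∅).trans ?_⟩
  rw [worstSelLoss_empty]
  exact (worstLoss_mem_Icc hℓ hn x V h).2

theorem iInf_worstSelLoss_le_mul_hammingDist_add_worstLoss [DecidableEq X]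
    (hℓ : ∀ y y', ℓ y y' ∈ Set.Icc 0 B) (hc : 0 ≤ c) (hn : 0 < n) (z x : Fin n → X)
    (V : Set (X → Y)) (h : X → Y) :
    ⨅ A, worstSelLoss ℓ c x V h A ≤ c / n * hammingDist z x + worstLoss ℓ z V h :=
  (iInf_worstSelLoss_le x V h {i | z i ≠ x i}).trans
    (worstSelLoss_le_add_worstLoss hℓ hc hn (fun i hi ↦ by simpa [eq_comm] using hi) V h)

end SelectiveLoss

section Expectation

variable {X Y : Type*} [MeasurableSpace X] [MeasurableSingletonClass X] {ℓ : Y → Y → ℝ}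
  {B c : ℝ} {n : ℕ}

theorem integrable_iInf_worstSelLoss (hℓ : ∀ y y', ℓ y y' ∈ Set.Icc 0 B) (hc : 0 ≤ c)
    (hn : 0 < n) (Q : PMF X) (V : Set (X → Y)) (h : X → Y) :
    Integrable (fun x : Fin n → X ↦ ⨅ A, worstSelLoss ℓ c x V h A)
      (Measure.pi fun _ ↦ Q.toMeasure) :=
  .of_mem_Icc 0 B (aemeasurable_pi_toMeasure _ _)
    (.of_forall fun x ↦ iInf_worstSelLoss_mem_Icc hℓ hc hn x V h)

theorem integral_iInf_worstSelLoss_le (hℓ : ∀ y y', ℓ y y' ∈ Set.Icc 0 B) (hc : 0 ≤ c)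
    (hn : 0 < n) (P Q : PMF X) (V : Set (X → Y)) (h : X → Y) :
    ∫ x : Fin n → X, ⨅ A, worstSelLoss ℓ c x V h A ∂(Measure.pi fun _ ↦ Q.toMeasure) ≤
      c * tvDist P Q +
        ∫ z : Fin n → X, worstLoss ℓ z V h ∂(Measure.pi fun _ ↦ P.toMeasure) := by
  classical
  have hworst : Integrable (fun z : Fin n → X ↦ worstLoss ℓ z V h)
      (Measure.pi fun _ ↦ P.toMeasure) :=
    .of_mem_Icc 0 B (aemeasurable_pi_toMeasure _ _)
      (.of_forall fun z ↦ worstLoss_mem_Icc hℓ hn z V h)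
  have hcost : (n : ℝ) * (c / n * tvDist P Q) = c * tvDist P Q := by
    field_simp
  simpa only [Fintype.card_fin, hcost] using
    integral_pi_toMeasure_le_mul_tvDist_add P Q (integrable_iInf_worstSelLoss hℓ hc hn Q V h)
      hworst (c / n) fun z x ↦
        iInf_worstSelLoss_le_mul_hammingDist_add_worstLoss hℓ hc hn z x V h

theorem integral_selLoss_le_integral_iInf_worstSelLoss (hℓ : ∀ y y', ℓ y y' ∈ Set.Icc 0 B)
    (hc : 0 ≤ c) (hn : 0 < n) (Q : PMF X) {V : Set (X → Y)} {f : X → Y} (hf : f ∈ V)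
    (h : X → Y) {Astar : (Fin n → X) → Finset (Fin n)}
    (hAstar : ∀ x A, worstSelLoss ℓ c x V h (Astar x) ≤ worstSelLoss ℓ c x V h A) :
    ∫ x : Fin n → X, selLoss ℓ c x f h (Astar x) ∂(Measure.pi fun _ ↦ Q.toMeasure) ≤
      ∫ x : Fin n → X, ⨅ A, worstSelLoss ℓ c x V h A ∂(Measure.pi fun _ ↦ Q.toMeasure) :=
  integral_mono_of_nonneg
    (.of_forall fun x ↦ selLoss_nonneg (fun _ _ ↦ (hℓ _ _).1) hc x f h (Astar x))
    (integrable_iInf_worstSelLoss hℓ hc hn Q V h)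
    (.of_forall fun x ↦ (selLoss_le_worstSelLoss hℓ hn x hf h (Astar x)).trans
      (le_ciInf (hAstar x)))

end Expectation

theorem stmt_2_general {X Y : Type*} [MeasurableSpace X] [MeasurableSingletonClass X]
    (ℓ : Y → Y → ℝ) {B : ℝ} (hℓ : ∀ y y', ℓ y y' ∈ Set.Icc 0 B)
    {c : ℝ} (hc : 0 ≤ c) {n : ℕ} (hn : 0 < n)
    (P Q : PMF X) {V : Set (X → Y)} {f : X → Y} (hf : f ∈ V) (h : X → Y)
    {Astar : (Fin n → X) → Finset (Fin n)}
    (hAstar : ∀ (x : Fin n → X) (A : Finset (Fin n)),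
      worstSelLoss ℓ c x V h (Astar x) ≤ worstSelLoss ℓ c x V h A) :
    (∫ x : Fin n → X, (⨅ A : Finset (Fin n), worstSelLoss ℓ c x V h A)
        ∂(Measure.pi fun _ => Q.toMeasure)) ≤
      c * tvDist P Q +
        ∫ z : Fin n → X, worstLoss ℓ z V h ∂(Measure.pi fun _ => P.toMeasure) ∧
    (∫ x : Fin n → X, selLoss ℓ c x f h (Astar x)
        ∂(Measure.pi fun _ => Q.toMeasure)) ≤
      c * tvDist P Q +
        ∫ z : Fin n → X, worstLoss ℓ z V h ∂(Measure.pi fun _ => P.toMeasure) := by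
  have hmin := integral_iInf_worstSelLoss_le hℓ hc hn P Q V h
  exact ⟨hmin, (integral_selLoss_le_integral_iInf_worstSelLoss hℓ hc hn Q hf h hAstar).trans hmin⟩

theorem stmt_2 {X Y : Type*} [Countable X] [MeasurableSpace X] [DiscreteMeasurableSpace X]
    (ℓ : Y → Y → ℝ) (hℓ : ∀ y y', ℓ y y' ∈ Set.Icc (0 : ℝ) 1)
    (c : ℝ) (hc : c ∈ Set.Ioc (0 : ℝ) 1) {n : ℕ} (hn : 0 < n)
    (P Q : PMF X) (V : Set (X → Y)) (hV : V.Nonempty)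
    (f : X → Y) (hf : f ∈ V) (h : X → Y)
    (Astar : (Fin n → X) → Finset (Fin n))
    (hAstar : ∀ (x : Fin n → X) (A : Finset (Fin n)),
      worstSelLoss ℓ c x V h (Astar x) ≤ worstSelLoss ℓ c x V h A) :
    (∫ x : Fin n → X, (⨅ A : Finset (Fin n), worstSelLoss ℓ c x V h A)
        ∂(Measure.pi fun _ => Q.toMeasure)) ≤
      c * tvDist P Q +
        ∫ z : Fin n → X, worstLoss ℓ z V h ∂(Measure.pi fun _ => P.toMeasure) ∧
    (∫ x : Fin n → X, selLoss ℓ c x f h (Astar x)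
        ∂(Measure.pi fun _ => Q.toMeasure)) ≤
      c * tvDist P Q +
        ∫ z : Fin n → X, worstLoss ℓ z V h ∂(Measure.pi fun _ => P.toMeasure) := by
  exact stmt_2_general ℓ hℓ hc.1.le hn P Q hf h hAstar
end

section
/- Let F be a class of functions X → {0,1} of VC dimension d, let f ∈ F, and let P be a probability distribution on X. Then E_{x̄, z ~ P^n}[ max_{h ∈ VS(x̄, f(x̄))} L_z(VS(x̄, f(x̄)), h) ] ≤ 2d·log₂(2n) / n, where the loss is the 0-1 loss and x̄, z are independent i.i.d. samples of size n from P. -/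
open Finset MeasureTheory

/-- A class `F` of binary classifiers shatters a finite set `S`. -/
def Shatters {X : Type*} (F : Set (X → Bool)) (S : Finset X) : Prop :=
  ∀ b : X → Bool, ∃ g ∈ F, ∀ a ∈ S, g a = b a

/-- The 0-1 loss. -/
noncomputable def loss01 : Bool → Bool → ℝ := fun y y' => if y = y' then 0 else 1

/-- Version space: classifiers in `F` consistent with the labeled data. -/
def VS {X : Type*} (F : Set (X → Bool)) {n : ℕ} (xb : Fin n → X) (yb : Fin n → Bool) :
    Set (X → Bool) :=
  {g ∈ F | ∀ i, g (xb i) = yb i}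

/-- `L_z(V,h) = sup_{g ∈ V} (1/n)·Σ_i ℓ(g(z_i), h(z_i))` with the 0-1 loss. -/
noncomputable def worstLoss01 {X : Type*} {n : ℕ}
    (z : Fin n → X) (V : Set (X → Bool)) (h : X → Bool) : ℝ :=
  ⨆ g ∈ V, (1 / (n : ℝ)) * ∑ i, loss01 (g (z i)) (h (z i))

/-!
Given the pooled double sample `p` of `2n` points, a uniformly random swap of the pairs `(xᵢ, zᵢ)`
preserves the law of `(x̄, z)`, so it suffices to bound the average over the `2 ^ n` swaps `s`.
Let `N` be the number of labelings of the pooled points by `F`. For two distinct labelings, charge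
a swap `2 ^ (number of test disagreements)` if both are correct on the training half and `0`
otherwise; coordinate by coordinate, this averages to at most `1`. Hence
`2 ^ (n * diameter)` averages to at most `1 + N.choose 2`, which is at most `(2n) ^ (2d)` by the
Sauer–Shelah lemma, and Jensen's inequality for `log₂` finishes. Counting unordered pairs matters:
for `d = 1` the count `N ^ 2` could exceed `(2n) ^ 2`.
-/

section SauerShelah

variable {X ι : Type*} {F : Set (X → Bool)} {pt : ι → X} {d : ℕ}

lemma card_le_of_forall_exists_eqOn (hVC : ∀ S : Finset X, _root_.Shatters F S → S.card ≤ d)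
    {s : Finset ι} (hs : ∀ b : ι → Bool, ∃ g ∈ F, ∀ i ∈ s, g (pt i) = b i) : s.card ≤ d := by
  classical
  have pt_injOn : Set.InjOn pt s := by
    intro i hi j hj hij
    obtain ⟨g, -, hg⟩ := hs fun k => decide (k = i)
    simpa [hg i hi, hg j hj, eq_comm] using congrArg g hij
  rw [← card_image_of_injOn pt_injOn]
  refine hVC _ fun b => ?_
  obtain ⟨g, hg, hgb⟩ := hs (b ∘ pt)
  exact ⟨g, hg, forall_mem_image.2 hgb⟩

variable [Fintype ι]

open Classical in
/-- The labelings of the family of points `pt` realized by the class `F`. The family may repeat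
points, as an i.i.d. sample does. -/
noncomputable def restrictions (F : Set (X → Bool)) (pt : ι → X) : Finset (ι → Bool) :=
  {p | ∃ g ∈ F, g ∘ pt = p}

lemma mem_restrictions {p : ι → Bool} : p ∈ restrictions F pt ↔ ∃ g ∈ F, g ∘ pt = p := by
  simp [restrictions]

lemma exists_eqOn_of_shatters_supports [DecidableEq ι] {s : Finset ι}
    (hs : ((restrictions F pt).image fun p => ({i | p i} : Finset ι)).Shatters s) (b : ι → Bool) :
    ∃ g ∈ F, ∀ i ∈ s, g (pt i) = b i := by
  obtain ⟨_, hu, hsu⟩ := hs (filter_subset (fun i => b i = true) s)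
  obtain ⟨_, hp, rfl⟩ := mem_image.1 hu
  obtain ⟨g, hg, rfl⟩ := mem_restrictions.1 hp
  refine ⟨g, hg, fun i hi => Bool.eq_iff_iff.2 ?_⟩
  simpa [hi] using Finset.ext_iff.1 hsu i

lemma card_restrictions_le (hVC : ∀ S : Finset X, _root_.Shatters F S → S.card ≤ d)
    (pt : ι → X) :
    (restrictions F pt).card ≤ ∑ k ∈ Iic d, (Fintype.card ι).choose k := by
  classical
  let support (p : ι → Bool) : Finset ι := {i | p i}
  have support_injective : Function.Injective support := fun p q h =>
    funext fun i => Bool.eq_iff_iff.2 (by simpa [support] using Finset.ext_iff.1 h i)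
  set A := (restrictions F pt).image support
  have vcDim_le : A.vcDim ≤ d := Finset.sup_le fun s hs =>
    card_le_of_forall_exists_eqOn hVC (exists_eqOn_of_shatters_supports (mem_shatterer.1 hs))
  calc (restrictions F pt).card
      = A.card := (card_image_of_injective _ support_injective).symm
    _ ≤ A.shatterer.card := card_le_card_shatterer A
    _ ≤ ∑ k ∈ Iic A.vcDim, (Fintype.card ι).choose k := card_shatterer_le_sum_vcDim
    _ ≤ ∑ k ∈ Iic d, (Fintype.card ι).choose k :=
        sum_le_sum_of_subset (Iic_subset_Iic.2 vcDim_le)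

lemma choose_succ_add_pow_le_pow_succ (m : ℕ) {d : ℕ} (hd : 1 ≤ d) :
    m.choose (d + 1) + m ^ d ≤ m ^ (d + 1) := by
  rcases m.eq_zero_or_pos with rfl | hm
  · simp [Nat.ne_of_gt hd]
  calc m.choose (d + 1) + m ^ d
      ≤ m.descFactorial (d + 1) + m ^ d := by
        rw [Nat.choose_eq_descFactorial_div_factorial]
        gcongr
        exact Nat.div_le_self _ _
    _ ≤ (m - d) * m ^ d + m ^ d := by
        rw [Nat.descFactorial_succ]
        gcongr
        exact m.descFactorial_le_pow d
    _ = (m - d + 1) * m ^ d := by ring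
    _ ≤ m * m ^ d := by gcongr; omega
    _ = m ^ (d + 1) := (pow_succ' m d).symm

lemma sum_choose_le_pow_add_one (m : ℕ) {d : ℕ} (hd : 1 ≤ d) :
    ∑ k ∈ Iic d, m.choose k ≤ m ^ d + 1 := by
  rw [← Nat.range_succ_eq_Iic]
  induction d, hd using Nat.le_induction with
  | base => simp [sum_range_succ, add_comm]
  | succ d hd ih =>
    rw [sum_range_succ]
    have := choose_succ_add_pow_le_pow_succ m hd
    omega

lemma one_add_choose_two_le_pow {N m d : ℕ} (hm : 2 ≤ m) (hN : N ≤ ∑ k ∈ Iic d, m.choose k) :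
    1 + N.choose 2 ≤ m ^ (2 * d) := by
  rcases d.eq_zero_or_pos with rfl | hd
  · have : N ≤ 1 := by simpa [← Nat.range_succ_eq_Iic] using hN
    simp [Nat.choose_eq_zero_of_lt (Nat.lt_succ_of_le this)]
  have two_le_pow : 2 ≤ m ^ d := hm.trans (Nat.le_self_pow hd.ne' m)
  have choose_le : N.choose 2 ≤ (m ^ d + 1).choose 2 :=
    Nat.choose_le_choose 2 (hN.trans (sum_choose_le_pow_add_one m hd))
  rw [Nat.choose_two_right (m ^ d + 1), Nat.add_sub_cancel, add_one_mul] at choose_le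
  rw [mul_comm 2 d, pow_mul, sq]
  have := Nat.mul_le_mul_right (m ^ d) two_le_pow
  omega

end SauerShelah

section Loss

lemma loss01_nonneg (y y' : Bool) : 0 ≤ loss01 y y' := by
  unfold loss01; split_ifs <;> norm_num

lemma loss01_le_one (y y' : Bool) : loss01 y y' ≤ 1 := by
  unfold loss01; split_ifs <;> norm_num

lemma loss01_comm (y y' : Bool) : loss01 y y' = loss01 y' y := by
  simp only [loss01, eq_comm]

/-- The random variable of the theorem, on a training sample `p.1` and a test sample `p.2`: the
largest empirical distance on `p.2` between two classifiers that agree with `f` on `p.1`. -/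
noncomputable def versionSpaceDiam {X : Type*} (F : Set (X → Bool)) (f : X → Bool) {n : ℕ}
    (p : (Fin n → X) × (Fin n → X)) : ℝ :=
  ⨆ h ∈ VS F p.1 fun i => f (p.1 i), worstLoss01 p.2 (VS F p.1 fun i => f (p.1 i)) h

variable {X : Type*} (F : Set (X → Bool)) (f : X → Bool) {n : ℕ} (p : (Fin n → X) × (Fin n → X))

variable {F f p} in
lemma versionSpaceDiam_le {C : ℝ} (hC : 0 ≤ C)
    (hloss : ∀ g ∈ VS F p.1 fun i => f (p.1 i), ∀ h ∈ VS F p.1 fun i => f (p.1 i),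
      1 / (n : ℝ) * ∑ i, loss01 (g (p.2 i)) (h (p.2 i)) ≤ C) :
    versionSpaceDiam F f p ≤ C :=
  Real.iSup_le (fun h => Real.iSup_le (fun hh =>
    Real.iSup_le (fun g => Real.iSup_le (fun hg => hloss g hg h hh) hC) hC) hC) hC

lemma versionSpaceDiam_nonneg : 0 ≤ versionSpaceDiam F f p :=
  Real.iSup_nonneg fun _ => Real.iSup_nonneg fun _ => Real.iSup_nonneg fun _ =>
    Real.iSup_nonneg fun _ => mul_nonneg (by positivity) (sum_nonneg fun _ _ => loss01_nonneg _ _)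

lemma versionSpaceDiam_le_one : versionSpaceDiam F f p ≤ 1 := by
  refine versionSpaceDiam_le zero_le_one fun g _ h _ => ?_
  have sum_le : ∑ i, loss01 (g (p.2 i)) (h (p.2 i)) ≤ n := by
    simpa using sum_le_card_nsmul univ _ 1 fun i _ => loss01_le_one (g (p.2 i)) (h (p.2 i))
  rw [one_div_mul_eq_div]
  exact div_le_one_of_le₀ sum_le n.cast_nonneg

end Loss

section PairWeight

variable {κ : Type*} (r p q : κ × Bool → Bool)

/-- The charge of coordinate `i` to the labelings `p` and `q` of a double sample, when `(i, b)` is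
the training point and `(i, !b)` the test point: `0` if one of them differs from the true labeling
`r` at the training point, and otherwise `2` to the loss between them at the test point. -/
noncomputable def pairWeight (i : κ) (b : Bool) : ℝ :=
  if p (i, b) = r (i, b) ∧ q (i, b) = r (i, b) then 2 ^ loss01 (p (i, !b)) (q (i, !b)) else 0

lemma pairWeight_nonneg (i : κ) (b : Bool) : 0 ≤ pairWeight r p q i b := by
  unfold pairWeight; split_ifs <;> positivity

lemma pairWeight_comm (i : κ) (b : Bool) : pairWeight r p q i b = pairWeight r q p i b := by
  simp only [pairWeight, and_comm, loss01_comm]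

-- A summand `2` means that `p` and `q` differ at the test point, so one of them is wrong there and
-- the other summand, for which that is the training point, is `0`.
lemma sum_pairWeight_le_two (i : κ) : ∑ b, pairWeight r p q i b ≤ 2 := by
  simp only [Fintype.sum_bool, pairWeight, loss01, Bool.not_true, Bool.not_false]
  cases r (i, true) <;> cases r (i, false) <;> cases p (i, true) <;> cases p (i, false) <;>
    cases q (i, true) <;> cases q (i, false) <;> norm_num

variable [Fintype κ]

lemma sum_prod_pairWeight_le [DecidableEq κ] :
    ∑ s : κ → Bool, ∏ i, pairWeight r p q i (s i) ≤ 2 ^ Fintype.card κ := by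
  calc ∑ s : κ → Bool, ∏ i, pairWeight r p q i (s i)
      = ∏ i, ∑ b, pairWeight r p q i b := by rw [prod_univ_sum, Fintype.piFinset_univ]
    _ ≤ ∏ _ : κ, (2 : ℝ) := prod_le_prod
        (fun i _ => sum_nonneg fun b _ => pairWeight_nonneg r p q i b)
        fun i _ => sum_pairWeight_le_two r p q i
    _ = 2 ^ Fintype.card κ := by simp

variable {r p q} in
lemma prod_pairWeight_eq_two_rpow {s : κ → Bool} (hp : ∀ i, p (i, s i) = r (i, s i))
    (hq : ∀ i, q (i, s i) = r (i, s i)) :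
    ∏ i, pairWeight r p q i (s i) = 2 ^ ∑ i, loss01 (p (i, !s i)) (q (i, !s i)) := by
  rw [Real.rpow_sum_of_pos two_pos]
  exact prod_congr rfl fun i _ => if_pos ⟨hp i, hq i⟩

end PairWeight

lemma two_mul_le_sum_offDiag {α : Type*} {A : Finset α} {w : α → α → ℝ}
    (w_nonneg : ∀ p q, 0 ≤ w p q) (w_comm : ∀ p q, w p q = w q p) {p q : α} (hp : p ∈ A)
    (hq : q ∈ A) (hpq : p ≠ q) : 2 * w p q ≤ ∑ a ∈ A.offDiag, w a.1 a.2 := by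
  classical
  calc 2 * w p q
      = ∑ a ∈ {(p, q), (q, p)}, w a.1 a.2 := by
        rw [sum_pair (by simp [hpq]), w_comm q p, two_mul]
    _ ≤ ∑ a ∈ A.offDiag, w a.1 a.2 :=
        sum_le_sum_of_subset_of_nonneg (by simp [insert_subset_iff, hp, hq, hpq, hpq.symm])
          fun a _ _ => w_nonneg a.1 a.2

section PairPotential

variable {κ : Type*} [Fintype κ] (A : Finset (κ × Bool → Bool)) (r : κ × Bool → Bool)

/-- An upper bound for `2 ^ (number of test disagreements)` over all pairs of labelings in `A` that
agree with `r` on the training half selected by `s`. The sum runs over unordered pairs of distinct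
labelings, written as half of the sum over ordered ones; the summand `1` accounts for equal ones. -/
noncomputable def pairPotential (s : κ → Bool) : ℝ :=
  1 + 1 / 2 * ∑ a ∈ A.offDiag, ∏ i, pairWeight r a.1 a.2 i (s i)

lemma one_le_pairPotential (s : κ → Bool) : 1 ≤ pairPotential A r s :=
  le_add_of_nonneg_right <| mul_nonneg one_half_pos.le <|
    sum_nonneg fun a _ => prod_nonneg fun i _ => pairWeight_nonneg r a.1 a.2 i (s i)

lemma sum_pairPotential_le [DecidableEq κ] :
    ∑ s, pairPotential A r s ≤ 2 ^ Fintype.card κ * (1 + A.card.choose 2) := by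
  have sum_offDiag_le :
      ∑ s : κ → Bool, ∑ a ∈ A.offDiag, ∏ i, pairWeight r a.1 a.2 i (s i) ≤
        A.card * (A.card - 1) * 2 ^ Fintype.card κ := by
    rw [sum_comm]
    refine (sum_le_card_nsmul _ _ _ fun a _ => sum_prod_pairWeight_le r a.1 a.2).trans_eq ?_
    rw [offDiag_card, nsmul_eq_mul, Nat.cast_sub (Nat.le_mul_self _), Nat.cast_mul, mul_sub_one]
  simp only [pairPotential, sum_add_distrib, ← mul_sum]
  rw [Nat.cast_choose_two]
  simp only [sum_const, card_univ, Fintype.card_fun, Fintype.card_bool, nsmul_eq_mul, Nat.cast_pow,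
    Nat.cast_ofNat]
  linarith

variable {A r} in
lemma two_rpow_sum_loss01_le_pairPotential {p q : κ × Bool → Bool} {s : κ → Bool} (hp : p ∈ A)
    (hq : q ∈ A) (hpr : ∀ i, p (i, s i) = r (i, s i)) (hqr : ∀ i, q (i, s i) = r (i, s i)) :
    (2 : ℝ) ^ ∑ i, loss01 (p (i, !s i)) (q (i, !s i)) ≤ pairPotential A r s := by
  classical
  by_cases hpq : p = q
  · simpa [hpq, loss01] using one_le_pairPotential A r s
  have two_mul_le := two_mul_le_sum_offDiag (w := fun p q => ∏ i, pairWeight r p q i (s i))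
    (fun p q => prod_nonneg fun i _ => pairWeight_nonneg r p q i (s i))
    (fun p q => prod_congr rfl fun i _ => pairWeight_comm r p q i (s i)) hp hq hpq
  rw [← prod_pairWeight_eq_two_rpow hpr hqr, pairPotential]
  linarith

end PairPotential

lemma sum_logb_le_card_mul_logb {σ : Type*} [Fintype σ] [Nonempty σ] {b B : ℝ} (hb : 1 < b)
    {K : σ → ℝ} (hK : ∀ s, 0 < K s) (hB : ∑ s, K s ≤ Fintype.card σ * B) :
    ∑ s, Real.logb b (K s) ≤ Fintype.card σ * Real.logb b B := by
  have hcard : (0 : ℝ) < Fintype.card σ := by exact_mod_cast Fintype.card_pos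
  have mean_pos : 0 < (Fintype.card σ : ℝ)⁻¹ * ∑ s, K s :=
    mul_pos (inv_pos.2 hcard) (sum_pos (fun s _ => hK s) univ_nonempty)
  have jensen : (Fintype.card σ : ℝ)⁻¹ * ∑ s, Real.log (K s) ≤
      Real.log ((Fintype.card σ : ℝ)⁻¹ * ∑ s, K s) := by
    simpa [mul_sum] using strictConcaveOn_log_Ioi.concaveOn.le_map_sum (t := univ)
      (w := fun _ : σ => (Fintype.card σ : ℝ)⁻¹) (fun _ _ => by positivity) (by simp)
      fun s _ => hK s
  have log_mean_le : Real.log ((Fintype.card σ : ℝ)⁻¹ * ∑ s, K s) ≤ Real.log B :=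
    Real.log_le_log mean_pos ((inv_mul_le_iff₀ hcard).2 hB)
  simp only [Real.logb, ← sum_div, ← mul_div_assoc]
  exact div_le_div_of_nonneg_right ((inv_mul_le_iff₀ hcard).1 (jensen.trans log_mean_le))
    (Real.log_pos hb).le

section Swap

variable {X ι : Type*}

/-- The double sample `p` as a single family of points: `(i, false)` is the `i`-th point of `p.1`
and `(i, true)` the `i`-th point of `p.2`. -/
def pooled (p : (ι → X) × (ι → X)) (j : ι × Bool) : X :=
  bif j.2 then p.2 j.1 else p.1 j.1

/-- Exchange the `i`-th points of the two samples for every `i` with `s i = true`. -/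
def swapAt (s : ι → Bool) (p : (ι → X) × (ι → X)) : (ι → X) × (ι → X) :=
  (fun i => pooled p (i, s i), fun i => pooled p (i, !s i))

lemma measurePreserving_swapAt [Fintype ι] [MeasurableSpace X] (μ : ι → Measure X)
    [∀ i, SigmaFinite (μ i)] (s : ι → Bool) :
    MeasurePreserving (swapAt s) ((Measure.pi μ).prod (Measure.pi μ))
      ((Measure.pi μ).prod (Measure.pi μ)) := by
  have zip_preserving := measurePreserving_arrowProdEquivProdArrow X X ι μ μ
  have coordinate_preserving : ∀ i, MeasurePreserving
      (fun a : X × X => bif s i then a.swap else a) ((μ i).prod (μ i)) ((μ i).prod (μ i)) := by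
    intro i
    cases s i
    · exact MeasurePreserving.id _
    · exact Measure.measurePreserving_swap
  convert zip_preserving.comp
    ((measurePreserving_pi _ _ coordinate_preserving).comp zip_preserving.symm) using 1
  ext p i <;> cases hs : s i <;>
    simp [swapAt, pooled, hs, MeasurableEquiv.arrowProdEquivProdArrow,
      Equiv.arrowProdEquivProdArrow]

end Swap

lemma integral_le_of_sum_comp_le {α σ : Type*} [MeasurableSpace α] {μ : Measure α}
    [IsProbabilityMeasure μ] [Fintype σ] [Nonempty σ] {T : σ → α → α}
    (hT : ∀ s, MeasurePreserving (T s) μ μ) {φ : α → ℝ} (hφ : Integrable φ μ) {C : ℝ}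
    (hC : ∀ a, ∑ s, φ (T s a) ≤ Fintype.card σ * C) : ∫ a, φ a ∂μ ≤ C := by
  have integrable_comp : ∀ s, Integrable (fun a => φ (T s a)) μ := fun s =>
    (hT s).integrable_comp_of_integrable hφ
  have integral_comp : ∀ s, ∫ a, φ (T s a) ∂μ = ∫ a, φ a ∂μ := fun s => by
    rw [← integral_map (hT s).aemeasurable (by rw [(hT s).map_eq]; exact hφ.aestronglyMeasurable),
      (hT s).map_eq]
  refine le_of_mul_le_mul_left ?_ (Nat.cast_pos.2 (Fintype.card_pos (α := σ)) : (0 : ℝ) < _)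
  calc Fintype.card σ * ∫ a, φ a ∂μ
      = ∫ a, ∑ s, φ (T s a) ∂μ := by
        rw [integral_finsetSum _ fun s _ => integrable_comp s]
        simp [integral_comp]
    _ ≤ ∫ _, Fintype.card σ * C ∂μ :=
        integral_mono (integrable_finsetSum _ fun s _ => integrable_comp s)
          (integrable_const _) hC
    _ = Fintype.card σ * C := by simp

section VersionSpace

variable {X : Type*} {F : Set (X → Bool)} {d n : ℕ}

lemma versionSpaceDiam_swapAt_le (f : X → Bool) (p : (Fin n → X) × (Fin n → X))
    (s : Fin n → Bool) :
    versionSpaceDiam F f (swapAt s p) ≤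
      1 / n * Real.logb 2 (pairPotential (restrictions F (pooled p)) (f ∘ pooled p) s) := by
  have one_le := one_le_pairPotential (restrictions F (pooled p)) (f ∘ pooled p) s
  refine versionSpaceDiam_le
    (mul_nonneg (by positivity) (Real.logb_nonneg one_lt_two one_le)) fun g hg h hh => ?_
  refine mul_le_mul_of_nonneg_left ?_ (by positivity)
  have hgf : ∀ i, (g ∘ pooled p) (i, s i) = (f ∘ pooled p) (i, s i) := hg.2
  have hhf : ∀ i, (h ∘ pooled p) (i, s i) = (f ∘ pooled p) (i, s i) := hh.2
  rw [Real.le_logb_iff_rpow_le one_lt_two (zero_lt_one.trans_le one_le)]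
  exact two_rpow_sum_loss01_le_pairPotential (mem_restrictions.2 ⟨g, hg.1, rfl⟩)
    (mem_restrictions.2 ⟨h, hh.1, rfl⟩) hgf hhf

lemma sum_versionSpaceDiam_swapAt_le (hVC : ∀ S : Finset X, _root_.Shatters F S → S.card ≤ d)
    (f : X → Bool) (hn : 0 < n) (p : (Fin n → X) × (Fin n → X)) :
    ∑ s, versionSpaceDiam F f (swapAt s p) ≤
      Fintype.card (Fin n → Bool) * (2 * d * Real.logb 2 (2 * n) / n) := by
  set K := pairPotential (restrictions F (pooled p)) (f ∘ pooled p)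
  have one_add_choose_le :
      (1 + (restrictions F (pooled p)).card.choose 2 : ℝ) ≤ (2 * n) ^ (2 * d) := by
    have := card_restrictions_le hVC (pooled p)
    rw [Fintype.card_prod, Fintype.card_fin, Fintype.card_bool, mul_comm] at this
    exact_mod_cast one_add_choose_two_le_pow (by omega) this
  have sum_K_le : ∑ s, K s ≤ Fintype.card (Fin n → Bool) * (2 * n : ℝ) ^ (2 * d) := by
    refine (sum_pairPotential_le _ _).trans ?_
    simpa using one_add_choose_le
  have sum_logb_le := sum_logb_le_card_mul_logb one_lt_two
    (fun s => zero_lt_one.trans_le (one_le_pairPotential _ _ s)) sum_K_le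
  calc ∑ s, versionSpaceDiam F f (swapAt s p)
      ≤ ∑ s, 1 / n * Real.logb 2 (K s) :=
        sum_le_sum fun s _ => versionSpaceDiam_swapAt_le f p s
    _ = 1 / n * ∑ s, Real.logb 2 (K s) := (mul_sum _ _ _).symm
    _ ≤ 1 / n * (Fintype.card (Fin n → Bool) * Real.logb 2 ((2 * n : ℝ) ^ (2 * d))) := by gcongr
    _ = Fintype.card (Fin n → Bool) * (2 * d * Real.logb 2 (2 * n) / n) := by
        rw [Real.logb_pow]; push_cast; ring

theorem stmt_6_general [MeasurableSpace X]
    (hVC : ∀ S : Finset X, _root_.Shatters F S → S.card ≤ d) (f : X → Bool) (hn : 0 < n)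
    (μ : Fin n → Measure X) [∀ i, IsProbabilityMeasure (μ i)]
    (hmeas : AEStronglyMeasurable (versionSpaceDiam F f (n := n))
      ((Measure.pi μ).prod (Measure.pi μ))) :
    ∫ p, versionSpaceDiam F f p ∂((Measure.pi μ).prod (Measure.pi μ)) ≤
      2 * d * Real.logb 2 (2 * n) / n := by
  have integrable_diam : Integrable (versionSpaceDiam F f (n := n))
      ((Measure.pi μ).prod (Measure.pi μ)) := by
    refine .of_bound hmeas 1 (.of_forall fun p => ?_)
    rw [Real.norm_of_nonneg (versionSpaceDiam_nonneg F f p)]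
    exact versionSpaceDiam_le_one F f p
  exact integral_le_of_sum_comp_le (measurePreserving_swapAt μ) integrable_diam
    (sum_versionSpaceDiam_swapAt_le hVC f hn)

end VersionSpace

theorem stmt_6 {X : Type*} [Countable X] [MeasurableSpace X] [DiscreteMeasurableSpace X]
    (F : Set (X → Bool)) (d : ℕ)
    (hVC : ∀ S : Finset X, Shatters F S → S.card ≤ d)
    (f : X → Bool) (hf : f ∈ F)
    (P : PMF X) {n : ℕ} (hn : 0 < n) :
    (∫ p : (Fin n → X) × (Fin n → X),
        (⨆ h ∈ VS F p.1 fun i => f (p.1 i),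
          worstLoss01 p.2 (VS F p.1 fun i => f (p.1 i)) h)
        ∂((Measure.pi fun _ : Fin n => P.toMeasure).prod
            (Measure.pi fun _ : Fin n => P.toMeasure))) ≤
      2 * (d : ℝ) * Real.logb 2 (2 * n) / n :=
  stmt_6_general hVC f hn (fun _ => P.toMeasure) Measurable.of_discrete.aestronglyMeasurable
end

section
/- Let F be a class of functions X → {0,1} of VC dimension d, let f ∈ F, let P be a probability distribution on the countable set X, and let k ≥ 1 be an integer. Then for independent samples x̄, z ~ P^n: Pr[ there exists g ∈ F with g(x̄_i) = f(x̄_i) for all i ≤ n and |{i ≤ n : g(z_i) ≠ f(z_i)}| ≥ k ] ≤ (2n)^d · 2^{−k}. -/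
open Finset MeasureTheory

/-!
Exchanging `x i` and `z i` for any set of indices `i` preserves the joint law of the two
samples, so it suffices to fix `x` and `z` and to count the exchanges for which a bad `g`
exists. Whether `g` is bad depends only on the set `A` of the `2 * n` sample points where `g`
and `f` differ. A nonempty `A` is bad for at most `2 ^ (n - k)` exchanges, because at each of
the at least `k` indices that `A` meets, its point has to land in the second sample. Since
`f ∈ F`, the empty set is one of the possible `A`, and the Sauer–Shelah lemma leaves at most
`(2 * n) ^ d` nonempty ones.
-/

section SauerShelah

lemma sum_range_choose_succ_le_pow (m d : ℕ) : ∑ i ∈ range d, m.choose (i + 1) ≤ m ^ d := by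
  rcases m.eq_zero_or_pos with rfl | hm
  · simp
  induction d with
  | zero => simp
  | succ d ih =>
    rcases d.eq_zero_or_pos with rfl | hd
    · simp
    have choose_le : m.choose (d + 1) ≤ m ^ d * (m - 1) :=
      calc m.choose (d + 1) ≤ m.choose (d + 1) * (d + 1) := Nat.le_mul_of_pos_right _ d.succ_pos
        _ = m.choose d * (m - d) := Nat.choose_succ_right_eq m d
        _ ≤ m ^ d * (m - 1) := by
          gcongr
          · exact Nat.choose_le_pow m d
          · exact hd
    calc ∑ i ∈ range (d + 1), m.choose (i + 1)
        = ∑ i ∈ range d, m.choose (i + 1) + m.choose (d + 1) := sum_range_succ _ _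
      _ ≤ m ^ d + m ^ d * (m - 1) := by gcongr
      _ = m ^ d * (1 + (m - 1)) := by ring
      _ = m ^ (d + 1) := by rw [Nat.add_sub_cancel' hm, pow_succ]

lemma card_erase_empty_le_pow_of_vcDim_le {α : Type*} [Fintype α] [DecidableEq α]
    {𝒜 : Finset (Finset α)} {d : ℕ} (hempty : ∅ ∈ 𝒜) (hd : 𝒜.vcDim ≤ d) :
    #(𝒜.erase ∅) ≤ Fintype.card α ^ d := by
  have sauer : #𝒜 ≤ ∑ i ∈ range (d + 1), (Fintype.card α).choose i :=
    calc #𝒜 ≤ #𝒜.shatterer := card_le_card_shatterer 𝒜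
      _ ≤ ∑ i ∈ Iic 𝒜.vcDim, (Fintype.card α).choose i := card_shatterer_le_sum_vcDim
      _ ≤ ∑ i ∈ range (d + 1), (Fintype.card α).choose i :=
        sum_le_sum_of_subset fun i hi ↦ by
          simp only [mem_Iic, mem_range] at hi ⊢
          lia
  calc #(𝒜.erase ∅) = #𝒜 - 1 := card_erase_of_mem hempty
    _ ≤ ∑ i ∈ range d, (Fintype.card α).choose (i + 1) := by
      rwa [sum_range_succ', Nat.choose_zero_right, ← Nat.sub_le_iff_le_add] at sauer
    _ ≤ Fintype.card α ^ d := sum_range_choose_succ_le_pow _ d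

end SauerShelah

section ErrorSets

variable {X α : Type*} [Fintype α]

/-- The positions of the points `y a` of a finite sample at which the hypothesis `g` differs from
the target `f`. -/
def errorSet (f g : X → Bool) (y : α → X) : Finset α := {a | g (y a) ≠ f (y a)}

@[simp]
lemma mem_errorSet {f g : X → Bool} {y : α → X} {a : α} :
    a ∈ errorSet f g y ↔ g (y a) ≠ f (y a) := by
  simp [errorSet]

open scoped Classical in
/-- The error sets on the sample `y` of all hypotheses in the class `F`, for the target `f`. They
are the traces of `F` on the sample, translated by that of `f`; repeated sample points are kept
apart. -/
noncomputable def errorSets (F : Set (X → Bool)) (f : X → Bool) (y : α → X) :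
    Finset (Finset α) := {A | ∃ g ∈ F, errorSet f g y = A}

@[simp]
lemma mem_errorSets {F : Set (X → Bool)} {f : X → Bool} {y : α → X} {A : Finset α} :
    A ∈ errorSets F f y ↔ ∃ g ∈ F, errorSet f g y = A := by
  simp [errorSets]

lemma empty_mem_errorSets {F : Set (X → Bool)} {f : X → Bool} (hf : f ∈ F) (y : α → X) :
    ∅ ∈ errorSets F f y :=
  mem_errorSets.2 ⟨f, hf, by simp [errorSet]⟩

variable [DecidableEq α] {F : Set (X → Bool)} {f : X → Bool} {y : α → X} {s : Finset α}

lemma exists_mem_forall_ne_iff_of_shatters_errorSets (hs : (errorSets F f y).Shatters s)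
    {t : Finset α} (ht : t ⊆ s) : ∃ g ∈ F, ∀ a ∈ s, g (y a) ≠ f (y a) ↔ a ∈ t := by
  obtain ⟨A, hA, hst⟩ := hs ht
  obtain ⟨g, hg, rfl⟩ := mem_errorSets.1 hA
  exact ⟨g, hg, fun a ha ↦ by simp [← hst, ha]⟩

lemma injOn_of_shatters_errorSets (hs : (errorSets F f y).Shatters s) : Set.InjOn y s := by
  intro a ha b hb hab
  obtain ⟨g, -, hg⟩ :=
    exists_mem_forall_ne_iff_of_shatters_errorSets hs (singleton_subset_iff.2 ha)
  have hb_mem : b ∈ ({a} : Finset α) :=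
    (hg b hb).1 (hab ▸ (hg a ha).2 (mem_singleton_self a))
  exact (mem_singleton.1 hb_mem).symm

lemma shatters_image_of_shatters_errorSets [DecidableEq X] (hs : (errorSets F f y).Shatters s) :
    Shatters F (s.image y) := by
  intro b
  obtain ⟨g, hgF, hg⟩ := exists_mem_forall_ne_iff_of_shatters_errorSets hs
    (s.filter_subset fun a ↦ b (y a) ≠ f (y a))
  refine ⟨g, hgF, forall_mem_image.2 fun a ha ↦ ?_⟩
  have errors_iff : g (y a) ≠ f (y a) ↔ b (y a) ≠ f (y a) := by simpa [ha] using hg a ha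
  revert errors_iff
  cases g (y a) <;> cases b (y a) <;> cases f (y a) <;> decide

lemma vcDim_errorSets_le {d : ℕ} (hVC : ∀ S : Finset X, Shatters F S → #S ≤ d)
    (f : X → Bool) (y : α → X) : (errorSets F f y).vcDim ≤ d := by
  classical
  refine Finset.sup_le fun s hs ↦ ?_
  rw [mem_shatterer] at hs
  rw [← card_image_of_injOn (injOn_of_shatters_errorSets hs)]
  exact hVC _ (shatters_image_of_shatters_errorSets hs)

lemma card_errorSets_erase_empty_le {d : ℕ} (hVC : ∀ S : Finset X, Shatters F S → #S ≤ d)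
    (hf : f ∈ F) (y : α → X) : #((errorSets F f y).erase ∅) ≤ Fintype.card α ^ d :=
  card_erase_empty_le_pow_of_vcDim_le (empty_mem_errorSets hf y) (vcDim_errorSets_le hVC f y)

end ErrorSets

section Swaps

variable {X ι : Type*}

/-- The two samples `p.1` and `p.2` as one sample indexed by `ι × Bool`, with `false` marking the
first sample and `true` the second. -/
def pooledSample (p : (ι → X) × (ι → X)) : ι × Bool → X :=
  fun a ↦ bif a.2 then p.2 a.1 else p.1 a.1

/-- Exchange the `i`-th points of the two samples for every `i` with `σ i = true`. -/
def swapSamples (σ : ι → Bool) (p : (ι → X) × (ι → X)) : (ι → X) × (ι → X) :=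
  (fun i ↦ pooledSample p (i, σ i), fun i ↦ pooledSample p (i, !σ i))

variable [Fintype ι]

lemma measurePreserving_swapSamples [MeasurableSpace X] (μ : ι → Measure X)
    [∀ i, SigmaFinite (μ i)] (σ : ι → Bool) :
    MeasurePreserving (swapSamples σ) ((Measure.pi μ).prod (Measure.pi μ))
      ((Measure.pi μ).prod (Measure.pi μ)) := by
  have swap_pairs : MeasurePreserving
      (fun (q : ι → X × X) i ↦ (bif σ i then Prod.swap else id) (q i))
      (Measure.pi fun i ↦ (μ i).prod (μ i)) (Measure.pi fun i ↦ (μ i).prod (μ i)) := by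
    refine measurePreserving_pi _ _ fun i ↦ ?_
    cases σ i
    · exact MeasurePreserving.id _
    · exact Measure.measurePreserving_swap
  have unzip := measurePreserving_arrowProdEquivProdArrow X X ι μ μ
  convert (unzip.comp swap_pairs).comp (unzip.symm _) using 1
  funext p
  ext i <;> cases h : σ i <;>
    simp [swapSamples, pooledSample, h, MeasurableEquiv.arrowProdEquivProdArrow,
      Equiv.arrowProdEquivProdArrow]

variable [DecidableEq ι]

/-- The swaps that move every point of the error set `A` of the pooled sample into the second
sample, where `A` then has at least `k` points. -/
def separatingSwaps (A : Finset (ι × Bool)) (k : ℕ) : Finset (ι → Bool) :=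
  {σ | (∀ i, (i, σ i) ∉ A) ∧ k ≤ #{i | (i, !σ i) ∈ A}}

lemma mem_separatingSwaps {A : Finset (ι × Bool)} {k : ℕ} {σ : ι → Bool} :
    σ ∈ separatingSwaps A k ↔ (∀ i, (i, σ i) ∉ A) ∧ k ≤ #{i | (i, !σ i) ∈ A} := by
  simp [separatingSwaps]

lemma separatingSwaps_empty {k : ℕ} (hk : 1 ≤ k) :
    separatingSwaps (∅ : Finset (ι × Bool)) k = ∅ := by
  ext σ
  simp [mem_separatingSwaps, Nat.ne_of_gt hk]

lemma card_separatingSwaps_mul_two_pow_le (A : Finset (ι × Bool)) (k : ℕ) :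
    #(separatingSwaps A k) * 2 ^ k ≤ 2 ^ Fintype.card ι := by
  obtain hS | ⟨τ, hτ⟩ := (separatingSwaps A k).eq_empty_or_nonempty
  · simp [hS]
  set forced : Finset ι := {i | (i, !τ i) ∈ A}
  have agree {σ : ι → Bool} (hσ : σ ∈ separatingSwaps A k) {i : ι} (hi : i ∈ forced) :
      σ i = τ i := by
    by_contra hne
    exact (mem_separatingSwaps.1 hσ).1 i (Bool.eq_not.2 hne ▸ (mem_filter.1 hi).2)
  have subset_pi : separatingSwaps A k ⊆
      Fintype.piFinset fun i ↦ if i ∈ forced then {τ i} else univ := by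
    intro σ hσ
    rw [Fintype.mem_piFinset]
    intro i
    split_ifs with hi
    · exact mem_singleton.2 (agree hσ hi)
    · exact mem_univ _
  have card_le : #(separatingSwaps A k) ≤ 2 ^ #forcedᶜ :=
    calc #(separatingSwaps A k)
        ≤ ∏ i, #(if i ∈ forced then {τ i} else (univ : Finset Bool)) :=
          (card_le_card subset_pi).trans_eq (Fintype.card_piFinset _)
      _ = ∏ i, if i ∈ forcedᶜ then 2 else 1 := by
          refine prod_congr rfl fun i _ ↦ ?_
          by_cases hi : i ∈ forced <;> simp [hi]
      _ = 2 ^ #forcedᶜ := by rw [Fintype.prod_ite_mem, prod_const]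
  calc #(separatingSwaps A k) * 2 ^ k ≤ 2 ^ #forcedᶜ * 2 ^ #forced :=
        Nat.mul_le_mul card_le (Nat.pow_le_pow_right two_pos (mem_separatingSwaps.1 hτ).2)
    _ = 2 ^ Fintype.card ι := by rw [← pow_add, card_compl_add_card]

end Swaps

open scoped Classical in
lemma card_mul_measure_le_of_forall_card_le {Ω κ : Type*} [MeasurableSpace Ω] [Fintype κ]
    {μ : Measure Ω} {T : κ → Ω → Ω} (hT : ∀ s, MeasurePreserving (T s) μ μ) {E : Set Ω}
    (hE : NullMeasurableSet E μ) {c : ENNReal} (hc : ∀ ω, (#{s | T s ω ∈ E} : ENNReal) ≤ c) :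
    Fintype.card κ * μ E ≤ c * μ Set.univ := by
  have preimage_null (s : κ) : NullMeasurableSet (T s ⁻¹' E) μ :=
    hE.preimage (hT s).quasiMeasurePreserving
  calc Fintype.card κ * μ E = ∑ s, μ (T s ⁻¹' E) := by
        simp [fun s ↦ (hT s).measure_preimage hE]
    _ = ∑ s, ∫⁻ ω, (T s ⁻¹' E).indicator 1 ω ∂μ := by
        simp_rw [fun s ↦ lintegral_indicator_one₀ (preimage_null s)]
    _ = ∫⁻ ω, ∑ s, (T s ⁻¹' E).indicator 1 ω ∂μ :=
        (lintegral_finsetSum' _ fun s _ ↦ aemeasurable_const.indicator₀ (preimage_null s)).symm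
    _ = ∫⁻ ω, #{s | T s ω ∈ E} ∂μ := by simp [Set.indicator_apply]
    _ ≤ ∫⁻ _, c ∂μ := lintegral_mono hc
    _ = c * μ Set.univ := lintegral_const c

section DoubleSample

variable {X ι : Type*} [Fintype ι]

/-- The pairs of samples for which some hypothesis in `F` agrees with the target `f` on the whole
first sample, yet makes at least `k` errors on the second. -/
def misleadingSamples (F : Set (X → Bool)) (f : X → Bool) (k : ℕ) :
    Set ((ι → X) × (ι → X)) :=
  {p | ∃ g ∈ F, (∀ i, g (p.1 i) = f (p.1 i)) ∧ k ≤ #{i | g (p.2 i) ≠ f (p.2 i)}}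

lemma swapSamples_mem_misleadingSamples_iff [DecidableEq ι] {F : Set (X → Bool)} {f : X → Bool}
    {k : ℕ} {σ : ι → Bool} {p : (ι → X) × (ι → X)} :
    swapSamples σ p ∈ misleadingSamples F f k ↔
      ∃ A ∈ errorSets F f (pooledSample p), σ ∈ separatingSwaps A k := by
  simp [misleadingSamples, swapSamples, mem_separatingSwaps]

open scoped Classical in
lemma card_misleading_swaps_mul_two_pow_le {F : Set (X → Bool)} {f : X → Bool} {d k : ℕ}
    (hVC : ∀ S : Finset X, Shatters F S → #S ≤ d) (hf : f ∈ F) (hk : 1 ≤ k)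
    (p : (ι → X) × (ι → X)) :
    #{σ : ι → Bool | swapSamples σ p ∈ misleadingSamples F f k} * 2 ^ k ≤
      (2 * Fintype.card ι) ^ d * 2 ^ Fintype.card ι := by
  set 𝒜 := (errorSets F f (pooledSample p)).erase ∅
  have subset_biUnion : ({σ | swapSamples σ p ∈ misleadingSamples F f k} : Finset (ι → Bool)) ⊆
      𝒜.biUnion (separatingSwaps · k) := by
    intro σ hσ
    obtain ⟨A, hA, hσA⟩ := swapSamples_mem_misleadingSamples_iff.1 (mem_filter.1 hσ).2
    have A_ne_empty : A ≠ ∅ := by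
      rintro rfl
      simp [separatingSwaps_empty hk] at hσA
    exact mem_biUnion.2 ⟨A, mem_erase.2 ⟨A_ne_empty, hA⟩, hσA⟩
  calc #{σ : ι → Bool | swapSamples σ p ∈ misleadingSamples F f k} * 2 ^ k
      ≤ (∑ A ∈ 𝒜, #(separatingSwaps A k)) * 2 ^ k := by
        gcongr
        exact (card_le_card subset_biUnion).trans card_biUnion_le
    _ = ∑ A ∈ 𝒜, #(separatingSwaps A k) * 2 ^ k := sum_mul _ _ _
    _ ≤ #𝒜 * 2 ^ Fintype.card ι :=
        sum_le_card_nsmul _ _ _ fun A _ ↦ card_separatingSwaps_mul_two_pow_le A k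
    _ ≤ (2 * Fintype.card ι) ^ d * 2 ^ Fintype.card ι := by
        gcongr
        simpa [mul_comm] using card_errorSets_erase_empty_le hVC hf (pooledSample p)

theorem stmt_17_general [MeasurableSpace X] {F : Set (X → Bool)} {d : ℕ}
    (hVC : ∀ S : Finset X, Shatters F S → #S ≤ d) {f : X → Bool} (hf : f ∈ F)
    (μ : ι → Measure X) [∀ i, IsProbabilityMeasure (μ i)] {k : ℕ} (hk : 1 ≤ k)
    (hE : NullMeasurableSet (misleadingSamples F f k) ((Measure.pi μ).prod (Measure.pi μ))) :
    ((Measure.pi μ).prod (Measure.pi μ)) (misleadingSamples F f k) ≤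
      ENNReal.ofReal ((2 * (Fintype.card ι : ℝ)) ^ d * (1 / 2) ^ k) := by
  classical
  set ν := (Measure.pi μ).prod (Measure.pi μ)
  set N := Fintype.card ι
  set bound : ℝ := (2 * N) ^ d * (1 / 2) ^ k
  have card_swaps_le (p : (ι → X) × (ι → X)) :
      (#{σ : ι → Bool | swapSamples σ p ∈ misleadingSamples F f k} : ENNReal) ≤
        2 ^ N * ENNReal.ofReal bound := by
    have card_mul_le : (#{σ : ι → Bool | swapSamples σ p ∈ misleadingSamples F f k} : ℝ) * 2 ^ k ≤
        (2 * N) ^ d * 2 ^ N := mod_cast card_misleading_swaps_mul_two_pow_le hVC hf hk p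
    calc (#{σ : ι → Bool | swapSamples σ p ∈ misleadingSamples F f k} : ENNReal)
        = ENNReal.ofReal #{σ : ι → Bool | swapSamples σ p ∈ misleadingSamples F f k} :=
          (ENNReal.ofReal_natCast _).symm
      _ ≤ ENNReal.ofReal (2 ^ N * bound) := by
          gcongr
          rw [← le_div_iff₀ (by positivity)] at card_mul_le
          exact card_mul_le.trans_eq (by simp only [bound, one_div_pow]; ring)
      _ = 2 ^ N * ENNReal.ofReal bound := by
          rw [ENNReal.ofReal_mul (by positivity), ENNReal.ofReal_pow two_pos.le,
            ENNReal.ofReal_ofNat]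
  have average : 2 ^ N * ν (misleadingSamples F f k) ≤ 2 ^ N * ENNReal.ofReal bound := by
    simpa [N, ν] using
      card_mul_measure_le_of_forall_card_le (measurePreserving_swapSamples μ) hE card_swaps_le
  exact (ENNReal.mul_le_mul_iff_right (by positivity) (by finiteness)).1 average

end DoubleSample

theorem stmt_17 {X : Type*} [Countable X] [DecidableEq X]
    [MeasurableSpace X] [DiscreteMeasurableSpace X]
    (F : Set (X → Bool)) (d : ℕ)
    (hVC : ∀ S : Finset X, Shatters F S → S.card ≤ d)
    (f : X → Bool) (hf : f ∈ F)
    (P : PMF X) {n : ℕ} (hn : 0 < n) (k : ℕ) (hk : 1 ≤ k) :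
    ((Measure.pi fun _ : Fin n => P.toMeasure).prod
        (Measure.pi fun _ : Fin n => P.toMeasure))
      {p : (Fin n → X) × (Fin n → X) |
        ∃ g ∈ F, (∀ i, g (p.1 i) = f (p.1 i)) ∧
          k ≤ (univ.filter fun i => g (p.2 i) ≠ f (p.2 i)).card} ≤
      ENNReal.ofReal ((2 * (n : ℝ)) ^ d * (1 / 2) ^ k) := by
  simpa only [Fintype.card_fin] using!
    stmt_17_general hVC hf (fun _ : Fin n ↦ P.toMeasure) hk
      MeasurableSet.of_discrete.nullMeasurableSet
end
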